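/- arXiv:math/0603303 — 2 statements merged into one kernel-verified Lean document; each statement's English description precedes it below -/
import Mathlib

section
/- Let α > 0. For every λ ∈ ℝ the improper Riemann integral F(λ) := lim_{R→∞} ∫_{−R}^{R} sgn(ξ) e^{−i·sgn(ξ)·π/4} |ξ|^{−1/2} e^{i(λξ + ξ|ξ|^α)} dξ exists; the function F : ℝ → ℂ is continuous, and F(λ) → 0 as |λ| → ∞. -/
open MeasureTheory Filter

/-- The partial integral
`∫_{-R}^{R} sgn ξ · e^{-i·sgn ξ·π/4} |ξ|^{-1/2} e^{i(λξ + ξ|ξ|^α)} dξ`. -/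
noncomputable def Fpartial (α l R : ℝ) : ℂ :=
  ∫ ξ in (-R)..R,
    (Real.sign ξ : ℂ) *
      Complex.exp (-Complex.I * (Real.sign ξ : ℂ) * ((Real.pi / 4 : ℝ) : ℂ)) *
      ((|ξ| ^ (-(2⁻¹) : ℝ) : ℝ) : ℂ) *
      Complex.exp (Complex.I * ((l * ξ + ξ * |ξ| ^ α : ℝ) : ℂ))


noncomputable def fk (α l ξ : ℝ) : ℂ :=
  ((ξ ^ (-(2⁻¹) : ℝ) : ℝ) : ℂ) * Complex.exp (Complex.I * ((l * ξ + ξ * ξ ^ α : ℝ) : ℂ))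

lemma fk_meas (α l : ℝ) : Measurable (fk α l) := by
  unfold fk
  fun_prop

lemma norm_exp_I (x : ℝ) : ‖Complex.exp (Complex.I * (x : ℂ))‖ = 1 := by
  rw [mul_comm]; exact Complex.norm_exp_ofReal_mul_I x

lemma fk_norm (α l ξ : ℝ) (h : 0 ≤ ξ) : ‖fk α l ξ‖ = ξ ^ (-(2⁻¹) : ℝ) := by
  unfold fk
  rw [norm_mul, norm_exp_I, mul_one, Complex.norm_real, Real.norm_eq_abs,
    abs_of_nonneg (Real.rpow_nonneg h _)]

lemma fk_int (α l p q : ℝ) (hp : 0 ≤ p) (hq : 0 ≤ q) :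
    IntervalIntegrable (fk α l) volume p q := by
  refine IntervalIntegrable.mono_fun' (g := fun x => x ^ (-(2⁻¹) : ℝ))
    (intervalIntegral.intervalIntegrable_rpow' (by norm_num))
    (fk_meas α l).aestronglyMeasurable ?_
  refine (ae_restrict_iff' measurableSet_uIoc).2 (Eventually.of_forall fun x hx => ?_)
  have : 0 ≤ x := (le_min hp hq).trans hx.1.le
  exact (fk_norm α l x this).le

lemma fk_small_zero (α l δ : ℝ) (hδ : 0 ≤ δ) : ‖∫ x in (0:ℝ)..δ, fk α l x‖ ≤ 2 * √δ := by
  refine (intervalIntegral.norm_integral_le_of_norm_le (g := fun x => x ^ (-(2⁻¹) : ℝ)) hδ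
    (Eventually.of_forall fun x hx => (fk_norm α l x hx.1.le).le)
    (intervalIntegral.intervalIntegrable_rpow' (by norm_num))).trans ?_
  rw [integral_rpow (Or.inl (by norm_num)), Real.sqrt_eq_rpow]
  norm_num
  linarith

lemma fk_small_mid (α l p q : ℝ) (hp : 0 < p) (hpq : p ≤ q) :
    ‖∫ x in p..q, fk α l x‖ ≤ p ^ (-(2⁻¹) : ℝ) * (q - p) := by
  have := intervalIntegral.norm_integral_le_of_norm_le_const (a := p) (b := q) (f := fk α l)
    (C := p ^ (-(2⁻¹) : ℝ)) (fun x hx => by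
      rw [Set.uIoc_of_le hpq] at hx
      rw [fk_norm α l x (hp.trans hx.1).le]
      exact Real.rpow_le_rpow_of_nonpos hp hx.1.le (by norm_num))
  rwa [abs_of_nonneg (by linarith)] at this

lemma vdc (a a' φ D D' : ℝ → ℝ) (p q m : ℝ) (hpq : p ≤ q) (hm : 0 < m)
    (ha : ∀ x ∈ Set.Icc p q, HasDerivAt a (a' x) x)
    (hφ : ∀ x ∈ Set.Icc p q, HasDerivAt φ (D x) x)
    (hD : ∀ x ∈ Set.Icc p q, HasDerivAt D (D' x) x)
    (ha0 : ∀ x ∈ Set.Icc p q, 0 ≤ a x)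
    (hap : ∀ x ∈ Set.Icc p q, a x ≤ a p)
    (ha' : ∀ x ∈ Set.Icc p q, a' x ≤ 0)
    (hD' : ∀ x ∈ Set.Icc p q, 0 ≤ D' x)
    (hDm : ∀ x ∈ Set.Icc p q, m ≤ |D x|)
    (hmeas : Measurable (fun x => (a x : ℂ) * Complex.exp (Complex.I * (φ x : ℂ)))) :
    ‖∫ x in p..q, (a x : ℂ) * Complex.exp (Complex.I * (φ x : ℂ))‖ ≤ 5 * (a p / m) := by
  set f : ℝ → ℂ := fun x => (a x : ℂ) * Complex.exp (Complex.I * (φ x : ℂ)) with hf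
  have hpI : p ∈ Set.Icc p q := ⟨le_rfl, hpq⟩
  have hqI : q ∈ Set.Icc p q := ⟨hpq, le_rfl⟩
  have hDne : ∀ x ∈ Set.Icc p q, D x ≠ 0 := fun x hx h => by
    have := hDm x hx; rw [h, abs_zero] at this; linarith
  have hexp : ∀ x ∈ Set.Icc p q, HasDerivAt (fun x => Complex.exp (Complex.I * (φ x : ℂ)))
      (Complex.exp (Complex.I * (φ x : ℂ)) * (Complex.I * (D x : ℂ))) x := fun x hx =>
    (((hφ x hx).ofReal_comp).const_mul Complex.I).cexp
  have hfc : ∀ x ∈ Set.Icc p q, ContinuousAt f x := fun x hx =>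
    ((ha x hx).ofReal_comp.mul (hexp x hx)).continuousAt
  have hI : ∀ x ∈ Set.Icc p q, HasDerivAt (fun u => ∫ t in p..u, f t) (f x) x := by
    intro x hx
    refine intervalIntegral.integral_hasDerivAt_right ?_
      (hmeas.stronglyMeasurable.stronglyMeasurableAtFilter) (hfc x hx)
    refine ContinuousOn.intervalIntegrable_of_Icc hx.1 fun y hy => ?_
    exact (hfc y ⟨hy.1, hy.2.trans hx.2⟩).continuousWithinAt
  set r : ℝ → ℝ := fun x => (a' x * D x - a x * D' x) / D x ^ 2
  have hg : ∀ x ∈ Set.Icc p q, HasDerivAt (fun x => a x / D x) (r x) x := fun x hx =>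
    (ha x hx).div (hD x hx) (hDne x hx)
  set V : ℝ → ℂ := fun x => -Complex.I * (((a x / D x : ℝ) : ℂ) *
    Complex.exp (Complex.I * (φ x : ℂ))) with hV
  have hVd : ∀ x ∈ Set.Icc p q, HasDerivAt V
      (f x - Complex.I * ((r x : ℂ) * Complex.exp (Complex.I * (φ x : ℂ)))) x := by
    intro x hx
    refine (((hg x hx).ofReal_comp.mul (hexp x hx)).const_mul (-Complex.I)).congr_deriv ?_
    have : (D x : ℂ) ≠ 0 := by exact_mod_cast hDne x hx
    simp only [hf]
    push_cast
    field_simp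
    ring_nf
    simp only [Complex.I_sq]
    ring
  have hVn : ∀ x ∈ Set.Icc p q, ‖V x‖ ≤ a p / m := by
    intro x hx
    simp only [hV]
    rw [norm_mul, norm_mul, norm_exp_I, norm_neg, Complex.norm_I, one_mul, mul_one,
      Complex.norm_real, Real.norm_eq_abs, abs_div, abs_of_nonneg (ha0 x hx)]
    exact div_le_div₀ (ha0 p hpI) (hap x hx) hm (hDm x hx)
  have hinv : ∀ x ∈ Set.Icc p q, |1 / D x| ≤ 1 / m := by
    intro x hx
    rw [abs_div, abs_one]
    exact one_div_le_one_div_of_le hm (hDm x hx)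
  have hW : ∀ x ∈ Set.Icc p q, HasDerivAt (fun x => (∫ t in p..x, f t) - (V x - V p))
      (Complex.I * ((r x : ℂ) * Complex.exp (Complex.I * (φ x : ℂ)))) x := by
    intro x hx
    refine ((hI x hx).sub ((hVd x hx).sub_const (V p))).congr_deriv ?_
    ring
  have hB : ∀ x ∈ Set.Icc p q, HasDerivAt
      (fun x => (a p - a x) / m + a p * (1 / D p - 1 / D x))
      (-a' x / m + a p * (D' x / D x ^ 2)) x := by
    intro x hx
    have h1 := ((ha x hx).const_sub (a p)).div_const m
    have h2 := ((hD x hx).inv (hDne x hx)).const_sub (1 / D p) |>.const_mul (a p)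
    refine ((h1.add h2).congr_deriv ?_).congr_of_eventuallyEq ?_
    · ring
    · refine Eventually.of_forall fun y => ?_
      simp
  have key := image_norm_le_of_norm_deriv_right_le_deriv_boundary'
    (f := fun x => (∫ t in p..x, f t) - (V x - V p)) (a := p) (b := q)
    (fun x hx => (hW x hx).continuousAt.continuousWithinAt)
    (fun x hx => (hW x ⟨hx.1, hx.2.le⟩).hasDerivWithinAt)
    (B := fun x => (a p - a x) / m + a p * (1 / D p - 1 / D x))
    (by simp)
    (fun x hx => (hB x hx).continuousAt.continuousWithinAt)
    (fun x hx => (hB x ⟨hx.1, hx.2.le⟩).hasDerivWithinAt)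
    (by
      intro x hx'
      have hx : x ∈ Set.Icc p q := ⟨hx'.1, hx'.2.le⟩
      rw [norm_mul, norm_mul, norm_exp_I, Complex.norm_I, one_mul, mul_one,
        Complex.norm_real, Real.norm_eq_abs]
      have e : r x = a' x * (1 / D x) + - (a x * (D' x / D x ^ 2)) := by
        have := hDne x hx
        simp only [r]; field_simp; ring
      have h1 : |a' x * (1 / D x)| ≤ -a' x / m := by
        rw [abs_mul, abs_of_nonpos (ha' x hx), div_eq_mul_one_div (-a' x) m]
        exact mul_le_mul_of_nonneg_left (hinv x hx) (by linarith [ha' x hx])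
      have hh : 0 ≤ D' x / D x ^ 2 := div_nonneg (hD' x hx) (sq_nonneg _)
      have h2 : |-(a x * (D' x / D x ^ 2))| ≤ a p * (D' x / D x ^ 2) := by
        rw [abs_neg, abs_of_nonneg (mul_nonneg (ha0 x hx) hh)]
        exact mul_le_mul_of_nonneg_right (hap x hx) hh
      rw [e]
      exact (abs_add_le _ _).trans (add_le_add h1 h2))
    hqI
  have e : ∫ t in p..q, f t = ((∫ t in p..q, f t) - (V q - V p)) + V q - V p := by ring
  have b1 : (a p - a q) / m ≤ a p / m := by
    apply div_le_div_of_nonneg_right _ hm.le; linarith [ha0 q hqI]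
  have b2 : a p * (1 / D p - 1 / D q) ≤ 2 * (a p / m) := by
    have h1 := abs_le.1 (hinv p hpI)
    have h2 := abs_le.1 (hinv q hqI)
    have : a p * (1 / D p - 1 / D q) ≤ a p * (2 * (1 / m)) :=
      mul_le_mul_of_nonneg_left (by linarith [h1.2, h2.1]) (ha0 p hpI)
    calc _ ≤ _ := this
      _ = _ := by ring
  have n1 := norm_sub_le (((∫ t in p..q, f t) - (V q - V p)) + V q) (V p)
  have n2 := norm_add_le ((∫ t in p..q, f t) - (V q - V p)) (V q)
  rw [← e] at n1
  have := hVn p hpI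
  have := hVn q hqI
  linarith

lemma vdc_fk (α l p q m : ℝ) (hα : 0 < α) (hp : 0 < p) (hpq : p ≤ q) (hm : 0 < m)
    (h : ∀ x ∈ Set.Icc p q, m ≤ |l + (1 + α) * x ^ α|) :
    ‖∫ x in p..q, fk α l x‖ ≤ 5 * (p ^ (-(2⁻¹) : ℝ) / m) := by
  have pos : ∀ x ∈ Set.Icc p q, 0 < x := fun x hx => hp.trans_le hx.1
  refine vdc (fun x => x ^ (-(2⁻¹) : ℝ)) (fun x => -(2⁻¹) * x ^ (-(2⁻¹) - 1 : ℝ))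
    (fun x => l * x + x * x ^ α) (fun x => l + (1 + α) * x ^ α)
    (fun x => (1 + α) * (α * x ^ (α - 1))) p q m hpq hm ?_ ?_ ?_ ?_ ?_ ?_ ?_ h (fk_meas α l)
  · intro x hx
    exact Real.hasDerivAt_rpow_const (Or.inl (pos x hx).ne')
  · intro x hx
    have h1 := ((hasDerivAt_id x).const_mul l).add
      ((hasDerivAt_id x).mul (Real.hasDerivAt_rpow_const (p := α) (Or.inl (pos x hx).ne')))
    refine h1.congr_deriv ?_
    have : x ^ α = x * x ^ (α - 1) := by
      rw [Real.rpow_sub_one (pos x hx).ne']; field_simp [(pos x hx).ne']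
    simp only [id, this]
    ring
  · intro x hx
    exact ((Real.hasDerivAt_rpow_const (p := α) (Or.inl (pos x hx).ne')).const_mul _).const_add l
  · intro x hx; exact Real.rpow_nonneg (pos x hx).le _
  · intro x hx; exact Real.rpow_le_rpow_of_nonpos hp hx.1 (by norm_num)
  · intro x hx
    have := Real.rpow_nonneg (pos x hx).le (-(2⁻¹) - 1 : ℝ)
    linarith
  · intro x hx
    have := Real.rpow_nonneg (pos x hx).le (α - 1 : ℝ)
    positivity

lemma G_cont (α R : ℝ) (hR : 0 ≤ R) : Continuous fun l => ∫ x in (0:ℝ)..R, fk α l x := by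
  refine intervalIntegral.continuous_of_dominated_interval
    (bound := fun x => x ^ (-(2⁻¹) : ℝ)) (fun l => (fk_meas α l).aestronglyMeasurable)
    (fun l => Eventually.of_forall fun x hx => ?_)
    (intervalIntegral.intervalIntegrable_rpow' (by norm_num))
    (Eventually.of_forall fun x hx => ?_)
  · rw [Set.uIoc_of_le hR] at hx
    exact (fk_norm α l x hx.1.le).le
  · unfold fk; fun_prop

/-- uniform tail bound -/
lemma tail_bd (α : ℝ) (hα : 0 < α) (L : ℝ) : ∀ᶠ P : ℝ in atTop, ∀ l, |l| ≤ L → ∀ q, P ≤ q →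
    ‖∫ x in P..q, fk α l x‖ ≤ 5 * P ^ (-(2⁻¹) : ℝ) := by
  filter_upwards [(tendsto_rpow_atTop hα).eventually_ge_atTop (L + 1), eventually_gt_atTop 0]
    with P hP hP0 l hl q hq
  have := vdc_fk α l P q 1 hα hP0 hq one_pos ?_
  · simpa using this
  · intro x hx
    have h1 : P ^ α ≤ x ^ α := Real.rpow_le_rpow hP0.le hx.1 hα.le
    have h2 : 0 ≤ x ^ α := Real.rpow_nonneg (hP0.le.trans hx.1) _
    refine le_trans ?_ (le_abs_self _)
    nlinarith [(abs_le.1 hl).1]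

lemma rpow_half_tendsto : Tendsto (fun P : ℝ => 5 * P ^ (-(2⁻¹) : ℝ)) atTop (nhds 0) := by
  simpa using (tendsto_rpow_neg_atTop (y := (2⁻¹:ℝ)) (by norm_num)).const_mul 5

lemma G_exists (α : ℝ) (hα : 0 < α) (l : ℝ) :
    ∃ z, Tendsto (fun R : ℝ => ∫ x in (0:ℝ)..R, fk α l x) atTop (nhds z) := by
  apply cauchySeq_tendsto_of_complete
  rw [Metric.cauchySeq_iff']
  intro ε hε
  obtain ⟨P, h1, h2, h3⟩ := ((tail_bd α hα |l|).and
    ((rpow_half_tendsto.eventually_lt_const hε).and (eventually_ge_atTop 0))).exists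
  refine ⟨P, fun q hq => ?_⟩
  rw [dist_eq_norm, intervalIntegral.integral_interval_sub_left
    (fk_int α l _ _ le_rfl (h3.trans hq)) (fk_int α l _ _ le_rfl h3)]
  exact (h1 l le_rfl q hq).trans_lt h2

lemma G_continuous (α : ℝ) (hα : 0 < α) (G : ℝ → ℂ)
    (hG : ∀ l, Tendsto (fun R : ℝ => ∫ x in (0:ℝ)..R, fk α l x) atTop (nhds (G l))) :
    Continuous G := by
  refine TendstoLocallyUniformly.continuous (F := fun R l => ∫ x in (0:ℝ)..R, fk α l x)
    (p := atTop) ?_ ((eventually_ge_atTop 0).mono fun R hR => G_cont α R hR).frequently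
  rw [Metric.tendstoLocallyUniformly_iff]
  intro ε hε l
  refine ⟨Metric.ball l 1, Metric.ball_mem_nhds _ one_pos, ?_⟩
  filter_upwards [tail_bd α hα (|l| + 1), rpow_half_tendsto.eventually_lt_const hε,
    eventually_ge_atTop 0] with P h1 h2 h3 y hy
  refine lt_of_le_of_lt ?_ h2
  rw [dist_eq_norm]
  refine le_of_tendsto ((hG y).sub_const _).norm ?_
  filter_upwards [eventually_ge_atTop P] with q hq
  rw [intervalIntegral.integral_interval_sub_left
    (fk_int α y _ _ le_rfl (h3.trans hq)) (fk_int α y _ _ le_rfl h3)]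
  refine h1 y ?_ q hq
  rw [Metric.mem_ball, Real.dist_eq] at hy
  have := abs_add_le (y - l) l
  rw [sub_add_cancel] at this
  linarith

lemma rpow_neg_half (x : ℝ) (hx : 0 ≤ x) : x ^ (-(2⁻¹) : ℝ) = 1 / √x := by
  rw [Real.rpow_neg hx, Real.sqrt_eq_rpow, one_div, one_div]

lemma rpow_neg_half_le (x X : ℝ) (hX : 0 < X) (h : X / 2 ≤ x) :
    x ^ (-(2⁻¹) : ℝ) ≤ 2 / √X := by
  rw [rpow_neg_half x (by linarith), div_le_div_iff₀ (Real.sqrt_pos.2 (by linarith))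
    (Real.sqrt_pos.2 hX), one_mul]
  rw [Real.sqrt_le_left (by positivity), mul_pow, Real.sq_sqrt (by linarith)]
  linarith

lemma lower_c (α : ℝ) (hα : 0 < α) : ∃ c : ℝ, 0 < c ∧ ∀ θ : ℝ, 0 < θ → θ ≤ 1 / 2 →
    c * θ ≤ 1 - (1 - θ) ^ α ∧ c * θ ≤ (1 + θ) ^ α - 1 := by
  refine ⟨α / (2 * (1 + α)), by positivity, fun θ h0 h1 => ?_⟩
  set b := α * θ / 2 with hb
  have hb0 : 0 < b := by positivity
  have hA : 1 + b ≤ (1 + θ) ^ α := by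
    rw [Real.rpow_def_of_pos (by linarith)]
    have h2 := Real.add_one_le_exp (Real.log (1 + θ) * α)
    have h3 := Real.one_sub_inv_le_log_of_pos (x := 1 + θ) (by linarith)
    have h4 : θ / 2 ≤ 1 - (1 + θ)⁻¹ := by
      have : 1 - (1 + θ)⁻¹ = θ / (1 + θ) := by field_simp; ring
      rw [this]
      exact div_le_div_of_nonneg_left h0.le (by linarith) (by linarith)
    nlinarith
  have hc : α / (2 * (1 + α)) * θ = b / (1 + α) := by rw [hb]; field_simp
  have hbα : b ≤ α := by nlinarith
  rw [hc]
  constructor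
  · have h2 : (1 - θ) ^ α ≤ ((1 + θ) ^ α)⁻¹ := by
      rw [← Real.inv_rpow (by linarith)]
      refine Real.rpow_le_rpow (by linarith) ?_ hα.le
      rw [← one_div, le_div_iff₀ (by linarith)]
      nlinarith
    have h3 : ((1 + θ) ^ α)⁻¹ ≤ (1 + b)⁻¹ := inv_anti₀ (by linarith) hA
    have h4 : b / (1 + α) ≤ 1 - (1 + b)⁻¹ := by
      have : 1 - (1 + b)⁻¹ = b / (1 + b) := by field_simp; ring
      rw [this]
      exact div_le_div_of_nonneg_left hb0.le (by linarith) (by linarith)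
    linarith
  · have : b / (1 + α) ≤ b := div_le_self hb0.le (by linarith)
    linarith

lemma lowD (α c X θ x : ℝ) (hα : 0 < α) (hX : 0 < X) (h0 : 0 < θ) (h1 : θ ≤ 1 / 2)
    (hc : 0 < c) (hcc : c * θ ≤ 1 - (1 - θ) ^ α ∧ c * θ ≤ (1 + θ) ^ α - 1) (hx : 0 ≤ x)
    (h : x ≤ X * (1 - θ) ∨ X * (1 + θ) ≤ x) :
    c * θ * X ^ α ≤ |-((1 + α) * X ^ α) + (1 + α) * x ^ α| := by
  have hY : 0 < X ^ α := Real.rpow_pos_of_pos hX _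
  have e : -((1 + α) * X ^ α) + (1 + α) * x ^ α = (1 + α) * (x ^ α - X ^ α) := by ring
  have h2 : c * θ * X ^ α ≤ |x ^ α - X ^ α| := by
    rcases h with h | h
    · have h3 : x ^ α ≤ X ^ α * (1 - θ) ^ α := by
        rw [← Real.mul_rpow hX.le (by linarith)]
        exact Real.rpow_le_rpow hx h hα.le
      refine le_trans ?_ (neg_le_abs _)
      nlinarith [hcc.1]
    · have h3 : X ^ α * (1 + θ) ^ α ≤ x ^ α := by
        rw [← Real.mul_rpow hX.le (by linarith)]
        exact Real.rpow_le_rpow (by positivity) h hα.le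
      refine le_trans ?_ (le_abs_self _)
      nlinarith [hcc.2]
  rw [e, abs_mul, abs_of_pos (by linarith : 0 < 1 + α)]
  nlinarith [abs_nonneg (x ^ α - X ^ α)]

lemma decay_pos (α : ℝ) (hα : 0 < α) (ε : ℝ) (hε : 0 < ε) :
    ∀ᶠ l : ℝ in atTop, ∀ᶠ R : ℝ in atTop, ‖∫ x in (0:ℝ)..R, fk α l x‖ ≤ 9 * ε := by
  filter_upwards [eventually_ge_atTop (5 / ε ^ 2), eventually_gt_atTop 0] with l hl hl0
  filter_upwards [eventually_ge_atTop (ε ^ 2)] with R hR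
  have hp : 0 < ε ^ 2 := by positivity
  rw [← intervalIntegral.integral_add_adjacent_intervals
    (fk_int α l 0 (ε ^ 2) le_rfl hp.le) (fk_int α l (ε ^ 2) R hp.le (hp.le.trans hR))]
  have h1 := fk_small_zero α l (ε ^ 2) hp.le
  have h2 := vdc_fk α l (ε ^ 2) R l hα hp hR hl0 (fun x hx => by
    have := Real.rpow_nonneg (hp.le.trans hx.1) α
    refine le_trans ?_ (le_abs_self _)
    nlinarith)
  rw [Real.sqrt_sq hε.le] at h1
  rw [rpow_neg_half _ hp.le, Real.sqrt_sq hε.le] at h2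
  have h3 : 5 * (1 / ε / l) ≤ ε := by
    rw [div_le_iff₀ hp] at hl
    rw [div_div, mul_one_div, div_le_iff₀ (by positivity)]
    nlinarith
  have := norm_add_le (∫ x in (0:ℝ)..(ε^2), fk α l x) (∫ x in (ε^2)..R, fk α l x)
  linarith

lemma decay_neg (α : ℝ) (hα : 0 < α) (ε : ℝ) (hε : 0 < ε) (hε1 : ε ≤ 1) :
    ∀ᶠ X : ℝ in atTop, ∀ᶠ R : ℝ in atTop,
      ‖∫ x in (0:ℝ)..R, fk α (-((1 + α) * X ^ α)) x‖ ≤ 9 * ε := by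
  obtain ⟨c, hc, hcc⟩ := lower_c α hα
  filter_upwards [(tendsto_rpow_atTop hα).eventually_ge_atTop (10 / (c * ε ^ 2)),
    eventually_ge_atTop 4] with X hY hX4
  have hX : 0 < X := by linarith
  have hsX : 0 < √X := Real.sqrt_pos.2 hX
  have hsq : √X * √X = X := Real.mul_self_sqrt hX.le
  have hs2 : 2 ≤ √X := Real.le_sqrt_of_sq_le (by linarith)
  set Y := X ^ α with hYdef
  have hY0 : 0 < Y := Real.rpow_pos_of_pos hX _
  set θ := ε / √X with hθ
  have hθ0 : 0 < θ := by positivity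
  have hθ1 : θ ≤ 1 / 2 := by
    rw [hθ, div_le_div_iff₀ hsX (by norm_num)]; linarith
  have hp : 0 < ε ^ 2 := by positivity
  have hK : 10 / (c * ε * Y) ≤ ε := by
    rw [div_le_iff₀ (by positivity)] at hY ⊢
    linarith
  filter_upwards [eventually_ge_atTop (X * (1 + θ))] with R hR
  set l := -((1 + α) * Y) with hl
  have o1 : ε ^ 2 ≤ X / 2 := by nlinarith
  have o2 : X / 2 ≤ X * (1 - θ) := by nlinarith
  have o3 : X * (1 - θ) ≤ X * (1 + θ) := by nlinarith
  have p2 : 0 < X / 2 := by linarith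
  have p3 : 0 < X * (1 - θ) := by linarith
  have p4 : 0 < X * (1 + θ) := by linarith
  have p5 : 0 < R := by linarith
  have e : ∫ x in (0:ℝ)..R, fk α l x = (∫ x in (0:ℝ)..(ε^2), fk α l x)
      + (∫ x in (ε^2)..(X/2), fk α l x) + (∫ x in (X/2)..(X*(1-θ)), fk α l x)
      + (∫ x in (X*(1-θ))..(X*(1+θ)), fk α l x) + (∫ x in (X*(1+θ))..R, fk α l x) := by
    rw [intervalIntegral.integral_add_adjacent_intervals
        (fk_int α l _ _ le_rfl hp.le) (fk_int α l _ _ hp.le p2.le),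
      intervalIntegral.integral_add_adjacent_intervals
        (fk_int α l _ _ le_rfl p2.le) (fk_int α l _ _ p2.le p3.le),
      intervalIntegral.integral_add_adjacent_intervals
        (fk_int α l _ _ le_rfl p3.le) (fk_int α l _ _ p3.le p4.le),
      intervalIntegral.integral_add_adjacent_intervals
        (fk_int α l _ _ le_rfl p4.le) (fk_int α l _ _ p4.le p5.le)]
  have h1 := fk_small_zero α l (ε ^ 2) hp.le
  rw [Real.sqrt_sq hε.le] at h1
  have h2 := vdc_fk α l (ε ^ 2) (X / 2) (c * (1 / 2) * Y) hα hp o1 (by positivity) (fun x hx =>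
    lowD α c X (1 / 2) x hα hX (by norm_num) le_rfl hc (hcc _ (by norm_num) le_rfl)
      (hp.le.trans hx.1) (Or.inl (by linarith [hx.2])))
  rw [rpow_neg_half _ hp.le, Real.sqrt_sq hε.le] at h2
  have h2' : 5 * (1 / ε / (c * (1 / 2) * Y)) = 10 / (c * ε * Y) := by field_simp; ring
  have h3 := vdc_fk α l (X / 2) (X * (1 - θ)) (c * θ * Y) hα p2 o2 (by positivity) (fun x hx =>
    lowD α c X θ x hα hX hθ0 hθ1 hc (hcc _ hθ0 hθ1) (p2.le.trans hx.1) (Or.inl hx.2))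
  have h5 := vdc_fk α l (X * (1 + θ)) R (c * θ * Y) hα p4 hR (by positivity) (fun x hx =>
    lowD α c X θ x hα hX hθ0 hθ1 hc (hcc _ hθ0 hθ1) (p4.le.trans hx.1) (Or.inr hx.1))
  have hfin : 5 * (2 / √X / (c * θ * Y)) = 10 / (c * ε * Y) := by
    rw [hθ]; field_simp; ring
  have h3' : 5 * ((X / 2) ^ (-(2⁻¹) : ℝ) / (c * θ * Y)) ≤ 5 * (2 / √X / (c * θ * Y)) := by
    have := rpow_neg_half_le (X / 2) X hX le_rfl
    gcongr
  have h5' : 5 * ((X * (1 + θ)) ^ (-(2⁻¹) : ℝ) / (c * θ * Y)) ≤ 5 * (2 / √X / (c * θ * Y)) := by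
    have := rpow_neg_half_le (X * (1 + θ)) X hX (by linarith)
    gcongr
  have h4 := fk_small_mid α l _ _ p3 o3
  have h4' : (X * (1 - θ)) ^ (-(2⁻¹) : ℝ) * (X * (1 + θ) - X * (1 - θ)) ≤ 4 * ε := by
    have := rpow_neg_half_le (X * (1 - θ)) X hX o2
    calc _ ≤ 2 / √X * (X * (1 + θ) - X * (1 - θ)) :=
          mul_le_mul_of_nonneg_right this (by linarith)
      _ = 4 * ε * (X / (√X * √X)) := by rw [hθ]; field_simp; ring
      _ = 4 * ε := by rw [hsq, div_self hX.ne', mul_one]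
  rw [e]
  have := norm_add_le ((∫ x in (0:ℝ)..(ε^2), fk α l x)
      + (∫ x in (ε^2)..(X/2), fk α l x) + (∫ x in (X/2)..(X*(1-θ)), fk α l x)
      + (∫ x in (X*(1-θ))..(X*(1+θ)), fk α l x)) (∫ x in (X*(1+θ))..R, fk α l x)
  have := norm_add_le ((∫ x in (0:ℝ)..(ε^2), fk α l x)
      + (∫ x in (ε^2)..(X/2), fk α l x) + (∫ x in (X/2)..(X*(1-θ)), fk α l x))
      (∫ x in (X*(1-θ))..(X*(1+θ)), fk α l x)
  have := norm_add_le ((∫ x in (0:ℝ)..(ε^2), fk α l x)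
      + (∫ x in (ε^2)..(X/2), fk α l x)) (∫ x in (X/2)..(X*(1-θ)), fk α l x)
  have := norm_add_le (∫ x in (0:ℝ)..(ε^2), fk α l x) (∫ x in (ε^2)..(X/2), fk α l x)
  linarith

lemma decay_neg' (α : ℝ) (hα : 0 < α) (ε : ℝ) (hε : 0 < ε) (hε1 : ε ≤ 1) :
    ∀ᶠ l : ℝ in atBot, ∀ᶠ R : ℝ in atTop, ‖∫ x in (0:ℝ)..R, fk α l x‖ ≤ 9 * ε := by
  have ht : Tendsto (fun l : ℝ => ((-l) / (1 + α)) ^ (α⁻¹)) atBot atTop :=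
    (tendsto_rpow_atTop (inv_pos.2 hα)).comp
      (tendsto_neg_atBot_atTop.atTop_div_const (by linarith))
  filter_upwards [ht.eventually (decay_neg α hα ε hε hε1), eventually_le_atBot 0] with l h hl
  have h0 : 0 ≤ (-l) / (1 + α) := div_nonneg (by linarith) (by linarith)
  have : -((1 + α) * (((-l) / (1 + α)) ^ (α⁻¹)) ^ α) = l := by
    rw [Real.rpow_inv_rpow h0 hα.ne']
    field_simp
  rwa [this] at h

lemma G_decay (α : ℝ) (hα : 0 < α) (G : ℝ → ℂ)
    (hG : ∀ l, Tendsto (fun R : ℝ => ∫ x in (0:ℝ)..R, fk α l x) atTop (nhds (G l))) :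
    Tendsto G (cocompact ℝ) (nhds 0) := by
  rw [cocompact_eq_atBot_atTop, Metric.tendsto_nhds]
  intro ε hε
  have h1 : 0 < min 1 (ε / 10) := lt_min one_pos (by linarith)
  have h2 : 9 * min 1 (ε / 10) < ε := by
    have := min_le_right 1 (ε / 10); linarith
  have h3 : ∀ᶠ l in atBot ⊔ atTop, ∀ᶠ R : ℝ in atTop,
      ‖∫ x in (0:ℝ)..R, fk α l x‖ ≤ 9 * min 1 (ε / 10) :=
    eventually_sup.2 ⟨decay_neg' α hα _ h1 (min_le_left _ _), decay_pos α hα _ h1⟩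
  filter_upwards [h3] with l hl
  rw [dist_zero_right]
  exact (le_of_tendsto (hG l).norm hl).trans_lt h2

lemma Fpartial_eq (α l R : ℝ) (hR : 0 ≤ R) : Fpartial α l R =
    Complex.exp (-Complex.I * ((Real.pi / 4 : ℝ) : ℂ)) * (∫ x in (0:ℝ)..R, fk α l x) -
    (starRingEnd ℂ) (Complex.exp (-Complex.I * ((Real.pi / 4 : ℝ) : ℂ)) *
      (∫ x in (0:ℝ)..R, fk α l x)) := by
  set c := Complex.exp (-Complex.I * ((Real.pi / 4 : ℝ) : ℂ)) with hc
  set k : ℝ → ℂ := fun ξ => (Real.sign ξ : ℂ) *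
      Complex.exp (-Complex.I * (Real.sign ξ : ℂ) * ((Real.pi / 4 : ℝ) : ℂ)) *
      ((|ξ| ^ (-(2⁻¹) : ℝ) : ℝ) : ℂ) *
      Complex.exp (Complex.I * ((l * ξ + ξ * |ξ| ^ α : ℝ) : ℂ)) with hk
  have hpos : ∀ x, 0 < x → k x = c * fk α l x := by
    intro x hx
    simp only [hk, fk, hc, Real.sign_of_pos hx, abs_of_pos hx]
    push_cast
    ring_nf
  have hneg : ∀ x, 0 < x → k (-x) = - (starRingEnd ℂ) (c * fk α l x) := by
    intro x hx
    simp only [hk, fk, hc, Real.sign_of_neg (neg_lt_zero.2 hx), abs_neg, abs_of_pos hx, map_mul,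
      ← Complex.exp_conj, Complex.conj_ofReal, Complex.conj_I, map_neg]
    push_cast
    ring_nf
  have hci : IntervalIntegrable (fun x => c * fk α l x) volume 0 R :=
    (fk_int α l 0 R le_rfl hR).const_mul c
  have i1 : IntervalIntegrable k volume 0 R := by
    refine hci.congr fun x hx => ?_
    rw [Set.uIoc_of_le hR] at hx
    exact (hpos x hx.1).symm
  have hcj : IntervalIntegrable (fun x => -(starRingEnd ℂ) (c * fk α l x)) volume 0 R := by
    have := (intervalIntegrable_iff.1 hci)
    rw [intervalIntegrable_iff]
    exact ((Complex.conjCLE : ℂ →L[ℝ] ℂ).integrable_comp this).neg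
  have i2' : IntervalIntegrable (fun x => k (-x)) volume 0 R := by
    refine hcj.congr fun x hx => ?_
    rw [Set.uIoc_of_le hR] at hx
    exact (hneg x hx.1).symm
  have i2 : IntervalIntegrable k volume (-R) 0 := by
    have := (IntervalIntegrable.iff_comp_neg (f := k) (a := -R) (b := 0)).2
    simp only [neg_neg, neg_zero] at this
    exact this i2'.symm
  have s : Fpartial α l R = (∫ x in (-R)..0, k x) + ∫ x in (0:ℝ)..R, k x :=
    (intervalIntegral.integral_add_adjacent_intervals i2 i1).symm
  have s2 : (∫ x in (-R)..0, k x) = ∫ x in (0:ℝ)..R, k (-x) := by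
    rw [intervalIntegral.integral_comp_neg, neg_zero]
  have s3 : ∫ x in (0:ℝ)..R, k (-x) = ∫ x in (0:ℝ)..R, -(starRingEnd ℂ) (c * fk α l x) := by
    refine intervalIntegral.integral_congr_ae (Eventually.of_forall fun x hx => ?_)
    rw [Set.uIoc_of_le hR] at hx
    exact hneg x hx.1
  have s4 : ∫ x in (0:ℝ)..R, k x = ∫ x in (0:ℝ)..R, c * fk α l x := by
    refine intervalIntegral.integral_congr_ae (Eventually.of_forall fun x hx => ?_)
    rw [Set.uIoc_of_le hR] at hx
    exact hpos x hx.1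
  rw [s, s2, s3, s4, intervalIntegral.integral_neg, intervalIntegral.intervalIntegral_conj,
    intervalIntegral.integral_const_mul]
  ring

/-- For `α > 0`, the improper Riemann integral
`F(λ) = lim_{R→∞} ∫_{-R}^{R} sgn ξ · e^{-i·sgn ξ·π/4} |ξ|^{-1/2} e^{i(λξ + ξ|ξ|^α)} dξ`
exists for every `λ`; the function `F` is continuous and tends to `0` as `|λ| → ∞`. -/
theorem F_exists_continuous_decay (α : ℝ) (hα : 0 < α) :
    ∃ F : ℝ → ℂ,
      (∀ l : ℝ, Tendsto (fun R : ℝ => Fpartial α l R) atTop (nhds (F l))) ∧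
      Continuous F ∧
      Tendsto F (cocompact ℝ) (nhds 0) := by

  choose G hG using G_exists α hα
  set c := Complex.exp (-Complex.I * ((Real.pi / 4 : ℝ) : ℂ)) with hc
  have hT : Continuous fun z : ℂ => c * z - (starRingEnd ℂ) (c * z) := by
    have : Continuous fun z : ℂ => c * z := continuous_const.mul continuous_id
    exact this.sub (Complex.continuous_conj.comp this)
  refine ⟨fun l => c * G l - (starRingEnd ℂ) (c * G l), fun l => ?_,
    hT.comp (G_continuous α hα G hG), ?_⟩
  · refine ((hT.tendsto (G l)).comp (hG l)).congr' ?_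
    filter_upwards [eventually_ge_atTop 0] with R hR
    exact (Fpartial_eq α l R hR).symm
  · have := (hT.tendsto 0).comp (G_decay α hα G hG)
    simpa [Function.comp_def] using this
end

section
/- Let α > 0, β > (α+3)/2, t > 0, and define Ã(t,x,y) = t^{−1/2} ∫_{ℝ} sgn(ξ) e^{−i·sgn(ξ)·π/4} |ξ|^{−1/2} (1+|ξ|^α)^{1/2} (1+ξ²)^{−β/2} e^{−itξ/(1+|ξ|^α)} e^{i(x + y²/(4t))ξ} e^{i(y²/(4t))ξ|ξ|^α} dξ (an absolutely convergent integral). Then: (i) Ã(t,·,·) is continuous and bounded on ℝ²; (ii) Ã(t,·,·) is differentiable in x with ∂_x Ã(t,x,y) = i t^{−1/2} ∫_{ℝ} e^{−i·sgn(ξ)·π/4} |ξ|^{1/2} (1+|ξ|^α)^{1/2} (1+ξ²)^{−β/2} e^{−itξ/(1+|ξ|^α)} e^{i(x + y²/(4t))ξ} e^{i(y²/(4t))ξ|ξ|^α} dξ, which is also continuous and bounded; (iii) for every ψ ∈ L¹(ℝ²) and fixed y ∈ ℝ, (Ã(t,·,·) ⋆ ψ)(x,y) → 0 as |x| → ∞,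 and consequently the generalized Riemann integral lim_{a→−∞, b→+∞} ∫_{a}^{b} ((∂_x Ã)(t,·,·) ⋆ ψ)(x,y) dx equals 0 for every y ∈ ℝ. -/
open MeasureTheory Filter

/-- The `ξ`-integrand of the KP-BBM antiderivative kernel `Ã(t,x,y)`. -/
noncomputable def AtildeInt (α β t x y : ℝ) (ξ : ℝ) : ℂ :=
  (Real.sign ξ : ℂ) *
    Complex.exp (-Complex.I * (Real.sign ξ : ℂ) * ((Real.pi / 4 : ℝ) : ℂ)) *
    ((|ξ| ^ (-(2⁻¹) : ℝ) : ℝ) : ℂ) * (((1 + |ξ| ^ α) ^ (2⁻¹ : ℝ) : ℝ) : ℂ) *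
    (((1 + ξ ^ 2) ^ (-(β / 2)) : ℝ) : ℂ) *
    Complex.exp (-Complex.I * ((t * ξ / (1 + |ξ| ^ α) : ℝ) : ℂ)) *
    Complex.exp (Complex.I * (((x + y ^ 2 / (4 * t)) * ξ : ℝ) : ℂ)) *
    Complex.exp (Complex.I * ((y ^ 2 / (4 * t) * (ξ * |ξ| ^ α) : ℝ) : ℂ))

/-- The KP-BBM antiderivative kernel `Ã(t,x,y)`. -/
noncomputable def Atilde (α β t x y : ℝ) : ℂ :=
  ((t ^ (-(2⁻¹) : ℝ) : ℝ) : ℂ) * ∫ ξ : ℝ, AtildeInt α β t x y ξ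

/-- The `ξ`-integrand of `∂ₓÃ(t,x,y)`. -/
noncomputable def GtildeInt (α β t x y : ℝ) (ξ : ℝ) : ℂ :=
  Complex.exp (-Complex.I * (Real.sign ξ : ℂ) * ((Real.pi / 4 : ℝ) : ℂ)) *
    ((|ξ| ^ (2⁻¹ : ℝ) : ℝ) : ℂ) * (((1 + |ξ| ^ α) ^ (2⁻¹ : ℝ) : ℝ) : ℂ) *
    (((1 + ξ ^ 2) ^ (-(β / 2)) : ℝ) : ℂ) *
    Complex.exp (-Complex.I * ((t * ξ / (1 + |ξ| ^ α) : ℝ) : ℂ)) *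
    Complex.exp (Complex.I * (((x + y ^ 2 / (4 * t)) * ξ : ℝ) : ℂ)) *
    Complex.exp (Complex.I * ((y ^ 2 / (4 * t) * (ξ * |ξ| ^ α) : ℝ) : ℂ))

/-- The `x`-derivative kernel `∂ₓÃ(t,x,y)`. -/
noncomputable def Gtilde (α β t x y : ℝ) : ℂ :=
  Complex.I * ((t ^ (-(2⁻¹) : ℝ) : ℝ) : ℂ) * ∫ ξ : ℝ, GtildeInt α β t x y ξ

lemma kp_measurable_sign : Measurable Real.sign := by
  unfold Real.sign
  exact Measurable.ite measurableSet_Iio measurable_const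
    (Measurable.ite measurableSet_Ioi measurable_const measurable_const)

/-- modulus of the first integrand -/
noncomputable def kpA (α β ξ : ℝ) : ℝ :=
  |ξ| ^ (-(2⁻¹) : ℝ) * (1 + |ξ| ^ α) ^ (2⁻¹ : ℝ) * (1 + ξ ^ 2) ^ (-(β / 2))

/-- modulus of the second integrand -/
noncomputable def kpB (α β ξ : ℝ) : ℝ :=
  |ξ| ^ (2⁻¹ : ℝ) * (1 + |ξ| ^ α) ^ (2⁻¹ : ℝ) * (1 + ξ ^ 2) ^ (-(β / 2))

lemma kpA_nonneg (α β ξ : ℝ) : 0 ≤ kpA α β ξ := by unfold kpA; positivity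

lemma kpB_nonneg (α β ξ : ℝ) : 0 ≤ kpB α β ξ := by unfold kpB; positivity

lemma kpA_meas (α β : ℝ) : Measurable (kpA α β) := by
  unfold kpA; fun_prop

lemma kpB_meas (α β : ℝ) : Measurable (kpB α β) := by
  unfold kpB; fun_prop

lemma kpB_le (α β ξ : ℝ) (hα : 0 < α) :
    kpB α β ξ ≤ 2 ^ (2⁻¹ : ℝ) * (1 + ‖ξ‖ ^ 2) ^ (-(β - (α + 1) / 2) / 2) := by
  have h1 : (1 : ℝ) ≤ 1 + ξ ^ 2 := by nlinarith [sq_nonneg ξ]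
  have h0 : (0 : ℝ) < 1 + ξ ^ 2 := by linarith
  have habs : |ξ| ≤ (1 + ξ ^ 2) ^ (2⁻¹ : ℝ) := by
    have : |ξ| = (ξ ^ 2) ^ (2⁻¹ : ℝ) := by
      rw [← Real.sqrt_sq_eq_abs, Real.sqrt_eq_rpow]; norm_num
    rw [this]
    apply Real.rpow_le_rpow (sq_nonneg _) (by linarith) (by norm_num)
  have e1 : |ξ| ^ (2⁻¹ : ℝ) ≤ (1 + ξ ^ 2) ^ (4⁻¹ : ℝ) := by
    calc |ξ| ^ (2⁻¹ : ℝ) ≤ ((1 + ξ ^ 2) ^ (2⁻¹ : ℝ)) ^ (2⁻¹ : ℝ) :=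
          Real.rpow_le_rpow (abs_nonneg _) habs (by norm_num)
      _ = _ := by rw [← Real.rpow_mul h0.le]; norm_num
  have e2 : |ξ| ^ α ≤ (1 + ξ ^ 2) ^ (α / 2) := by
    calc |ξ| ^ α ≤ ((1 + ξ ^ 2) ^ (2⁻¹ : ℝ)) ^ α :=
          Real.rpow_le_rpow (abs_nonneg _) habs hα.le
      _ = _ := by rw [← Real.rpow_mul h0.le]; congr 1; ring
  have e3 : 1 ≤ (1 + ξ ^ 2) ^ (α / 2) := Real.one_le_rpow h1 (by positivity)
  have e4 : (1 + |ξ| ^ α) ^ (2⁻¹ : ℝ) ≤ 2 ^ (2⁻¹ : ℝ) * (1 + ξ ^ 2) ^ (α / 4) := by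
    calc (1 + |ξ| ^ α) ^ (2⁻¹ : ℝ) ≤ (2 * (1 + ξ ^ 2) ^ (α / 2)) ^ (2⁻¹ : ℝ) :=
          Real.rpow_le_rpow (by positivity) (by linarith) (by norm_num)
      _ = _ := by
        rw [Real.mul_rpow (by norm_num) (by positivity), ← Real.rpow_mul h0.le]
        congr 2; ring
  unfold kpB
  calc _ ≤ (1 + ξ ^ 2) ^ (4⁻¹ : ℝ) * (2 ^ (2⁻¹ : ℝ) * (1 + ξ ^ 2) ^ (α / 4)) *
        (1 + ξ ^ 2) ^ (-(β / 2)) := by gcongr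
    _ = 2 ^ (2⁻¹ : ℝ) * ((1 + ξ ^ 2) ^ (4⁻¹ : ℝ) * (1 + ξ ^ 2) ^ (α / 4) *
        (1 + ξ ^ 2) ^ (-(β / 2))) := by ring
    _ = _ := by
      rw [← Real.rpow_add h0, ← Real.rpow_add h0, Real.norm_eq_abs, sq_abs]
      congr 2; ring

lemma kpB_int (α β : ℝ) (hα : 0 < α) (hβ : (α + 3) / 2 < β) : Integrable (kpB α β) := by
  have := (integrable_rpow_neg_one_add_norm_sq (E := ℝ) (μ := volume)
    (r := β - (α + 1) / 2) (by simp; linarith)).const_mul ((2 : ℝ) ^ (2⁻¹ : ℝ))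
  refine this.mono' (kpB_meas α β).aestronglyMeasurable (Eventually.of_forall fun ξ => ?_)
  rw [Real.norm_of_nonneg (kpB_nonneg _ _ _)]
  exact kpB_le α β ξ hα

lemma kp_loc : IntegrableOn (fun ξ : ℝ => |ξ| ^ (-(2⁻¹) : ℝ)) (Set.Icc (-1) 1) := by
  have h1 : IntegrableOn (fun ξ : ℝ => |ξ| ^ (-(2⁻¹) : ℝ)) (Set.Icc 0 1) := by
    have h := (intervalIntegral.intervalIntegrable_rpow' (a := 0) (b := 1)
      (r := (-(2⁻¹) : ℝ)) (by norm_num))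
    rw [intervalIntegrable_iff_integrableOn_Icc_of_le (by norm_num)] at h
    refine h.congr_fun (fun x hx => ?_) measurableSet_Icc
    simp only [abs_of_nonneg hx.1]
  have h2 := h1.comp_neg
  simp only [abs_neg, Set.neg_Icc, neg_zero] at h2
  have := h2.union h1
  rwa [Set.Icc_union_Icc_eq_Icc (by norm_num) (by norm_num)] at this

lemma kpA_int (α β : ℝ) (hα : 0 < α) (hβ : (α + 3) / 2 < β) : Integrable (kpA α β) := by
  have h1 := ((integrable_indicator_iff measurableSet_Icc).2 kp_loc).const_mul
    ((2 : ℝ) ^ (2⁻¹ : ℝ))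
  refine (h1.add (kpB_int α β hα hβ)).mono' (kpA_meas α β).aestronglyMeasurable
    (Eventually.of_forall fun ξ => ?_)
  rw [Real.norm_of_nonneg (kpA_nonneg _ _ _)]
  have hb := kpB_nonneg α β ξ
  simp only [Pi.add_apply]
  by_cases hξ : ξ ∈ Set.Icc (-1 : ℝ) 1
  · rw [Set.indicator_of_mem hξ]
    have h3 : |ξ| ≤ 1 := abs_le.2 hξ
    have h4 : (1 + |ξ| ^ α) ^ (2⁻¹ : ℝ) ≤ 2 ^ (2⁻¹ : ℝ) := by
      apply Real.rpow_le_rpow (by positivity) _ (by norm_num)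
      have := Real.rpow_le_one (abs_nonneg ξ) h3 hα.le
      linarith
    have h5 : (1 + ξ ^ 2) ^ (-(β / 2)) ≤ 1 :=
      Real.rpow_le_one_of_one_le_of_nonpos (by nlinarith [sq_nonneg ξ]) (by linarith)
    have : kpA α β ξ ≤ |ξ| ^ (-(2⁻¹) : ℝ) * 2 ^ (2⁻¹ : ℝ) * 1 := by
      unfold kpA; gcongr
    linarith
  · rw [Set.indicator_of_notMem hξ]
    have h3 : 1 ≤ |ξ| := by
      by_contra h
      exact hξ (abs_le.1 (not_le.1 h).le)
    have : kpA α β ξ ≤ kpB α β ξ := by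
      unfold kpA kpB
      gcongr ?_ * _ * _
      exact Real.rpow_le_rpow_of_exponent_le h3 (by norm_num)
    linarith

lemma kp_norm_neg (x : ℝ) : ‖Complex.exp (-Complex.I * (x : ℂ))‖ = 1 := by
  have := Complex.norm_exp_I_mul_ofReal (-x)
  rw [← this]; congr 2; push_cast; ring

lemma kp_norm_sign (x : ℝ) :
    ‖Complex.exp (-Complex.I * (x : ℂ) * ((Real.pi / 4 : ℝ) : ℂ))‖ = 1 := by
  rw [← kp_norm_neg (x * (Real.pi / 4))]; congr 2; push_cast; ring

lemma kpG_norm (α β t x y ξ : ℝ) : ‖GtildeInt α β t x y ξ‖ = kpB α β ξ := by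
  unfold GtildeInt kpB
  simp only [norm_mul, kp_norm_neg, kp_norm_sign, Complex.norm_exp_I_mul_ofReal, mul_one, one_mul,
    Complex.norm_real]
  rw [Real.norm_of_nonneg (by positivity), Real.norm_of_nonneg (by positivity),
    Real.norm_of_nonneg (by positivity)]

lemma kpA_norm (α β t x y ξ : ℝ) : ‖AtildeInt α β t x y ξ‖ ≤ kpA α β ξ := by
  unfold AtildeInt kpA
  simp only [norm_mul, kp_norm_neg, kp_norm_sign, Complex.norm_exp_I_mul_ofReal, mul_one, one_mul,
    Complex.norm_real]
  have hs : ‖Real.sign ξ‖ ≤ 1 := by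
    rcases Real.sign_apply_eq ξ with h | h | h <;> simp [h]
  rw [Real.norm_of_nonneg (r := |ξ| ^ (-(2⁻¹) : ℝ)) (by positivity),
    Real.norm_of_nonneg (r := (1 + |ξ| ^ α) ^ (2⁻¹ : ℝ)) (by positivity),
    Real.norm_of_nonneg (r := (1 + ξ ^ 2) ^ (-(β / 2))) (by positivity), mul_assoc, mul_assoc,
    mul_assoc]
  exact mul_le_of_le_one_left (by positivity) hs

lemma kpA_aesm (α β t x y : ℝ) : AEStronglyMeasurable (AtildeInt α β t x y) := by
  have := kp_measurable_sign
  apply Measurable.aestronglyMeasurable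
  unfold AtildeInt
  fun_prop

lemma kpG_aesm (α β t x y : ℝ) : AEStronglyMeasurable (GtildeInt α β t x y) := by
  have := kp_measurable_sign
  apply Measurable.aestronglyMeasurable
  unfold GtildeInt
  fun_prop

lemma kp_mul_id (α β t x y ξ : ℝ) :
    AtildeInt α β t x y ξ * (Complex.I * (ξ : ℂ)) = Complex.I * GtildeInt α β t x y ξ := by
  have h : Real.sign ξ * |ξ| ^ (-(2⁻¹) : ℝ) * ξ = |ξ| ^ (2⁻¹ : ℝ) := by
    have hs : Real.sign ξ * ξ = |ξ| := by
      rcases lt_trichotomy ξ 0 with h | h | h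
      · rw [Real.sign_of_neg h, abs_of_neg h]; ring
      · simp [h]
      · rw [Real.sign_of_pos h, abs_of_pos h]; ring
    rcases eq_or_ne ξ 0 with h | h
    · subst h; simp
    · have hp : 0 < |ξ| := abs_pos.2 h
      calc _ = (Real.sign ξ * ξ) * |ξ| ^ (-(2⁻¹) : ℝ) := by ring
        _ = |ξ| ^ (1 : ℝ) * |ξ| ^ (-(2⁻¹) : ℝ) := by rw [hs, Real.rpow_one]
        _ = _ := by rw [← Real.rpow_add hp]; norm_num
  have h' : ((Real.sign ξ : ℝ) : ℂ) * ((|ξ| ^ (-(2⁻¹) : ℝ) : ℝ) : ℂ) * (ξ : ℂ)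
      = ((|ξ| ^ (2⁻¹ : ℝ) : ℝ) : ℂ) := by exact_mod_cast h
  unfold AtildeInt GtildeInt
  rw [← h']
  ring

lemma kp_deriv_int (α β t x y ξ : ℝ) :
    HasDerivAt (fun x' : ℝ => AtildeInt α β t x' y ξ) (Complex.I * GtildeInt α β t x y ξ) x := by
  rw [← kp_mul_id]
  unfold AtildeInt
  have h0 : HasDerivAt (fun x' : ℝ => Complex.I * (((x' + y ^ 2 / (4 * t)) * ξ : ℝ) : ℂ))
      (Complex.I * (ξ : ℂ)) x := by
    have : HasDerivAt (fun x' : ℝ => (x' + y ^ 2 / (4 * t)) * ξ) (1 * ξ) x :=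
      ((hasDerivAt_id x).add_const _).mul_const ξ
    rw [one_mul] at this
    exact this.ofReal_comp.const_mul Complex.I
  refine ((h0.cexp.const_mul _).mul_const _).congr_deriv ?_
  ring

lemma kp_RL (α β t y : ℝ) :
    Tendsto (fun x : ℝ => Atilde α β t x y) (cocompact ℝ) (nhds 0) := by
  have h := Real.tendsto_integral_exp_smul_cocompact (AtildeInt α β t 0 y)
  have hp : (-(2 * Real.pi)⁻¹ : ℝ) ≠ 0 := neg_ne_zero.2 (inv_ne_zero (by positivity))
  have hc : Tendsto (fun x : ℝ => x * (-(2 * Real.pi)⁻¹)) (cocompact ℝ) (cocompact ℝ) :=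
    (Homeomorph.mulRight₀ _ hp).isClosedEmbedding.tendsto_cocompact
  have h2 := (h.comp hc).const_mul ((t ^ (-(2⁻¹) : ℝ) : ℝ) : ℂ)
  rw [mul_zero] at h2
  refine h2.congr fun x => ?_
  unfold Atilde
  congr 1
  simp only [Function.comp]
  congr 1
  ext ξ
  rw [Circle.smul_def, Real.fourierChar_apply]
  have e1 : (2 * Real.pi * -(ξ * (x * -(2 * Real.pi)⁻¹))) = x * ξ := by
    field_simp
  rw [e1, smul_eq_mul]
  unfold AtildeInt
  have e2 : Complex.exp (Complex.I * (((x + y ^ 2 / (4 * t)) * ξ : ℝ) : ℂ)) =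
      Complex.exp (((x * ξ : ℝ) : ℂ) * Complex.I) *
      Complex.exp (Complex.I * (((0 + y ^ 2 / (4 * t)) * ξ : ℝ) : ℂ)) := by
    rw [← Complex.exp_add]; congr 1; push_cast; ring
  rw [e2]; ring

lemma kp_conv_tendsto (K : ℝ → ℝ → ℂ) (hK : Continuous (fun q : ℝ × ℝ => K q.1 q.2))
    (C : ℝ) (hC : ∀ x y, ‖K x y‖ ≤ C)
    (h0 : ∀ y, Tendsto (fun x => K x y) (cocompact ℝ) (nhds 0))
    (ψ : ℝ × ℝ → ℂ) (hψ : Integrable ψ) (y : ℝ) :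
    Tendsto (fun x : ℝ => ∫ p : ℝ × ℝ, K (x - p.1) (y - p.2) * ψ p)
      (cocompact ℝ) (nhds 0) := by
  have hg : (cocompact ℝ).IsCountablyGenerated := by
    rw [cocompact_eq_atBot_atTop]; infer_instance
  have hz : (0 : ℂ) = ∫ p : ℝ × ℝ, (0 : ℂ) := by simp
  rw [hz]
  refine tendsto_integral_filter_of_dominated_convergence (fun p => C * ‖ψ p‖)
    (Eventually.of_forall fun x => ?_) (Eventually.of_forall fun x => Eventually.of_forall fun p => ?_)
    (hψ.norm.const_mul C) (Eventually.of_forall fun p => ?_)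
  · have : Continuous (fun p : ℝ × ℝ => K (x - p.1) (y - p.2)) :=
      hK.comp (f := fun p : ℝ × ℝ => (x - p.1, y - p.2)) (by fun_prop)
    exact this.aestronglyMeasurable.mul hψ.aestronglyMeasurable
  · rw [norm_mul]; gcongr; exact hC _ _
  · have hc : Tendsto (fun x : ℝ => x - p.1) (cocompact ℝ) (cocompact ℝ) :=
      (Homeomorph.subRight p.1).isClosedEmbedding.tendsto_cocompact
    have := ((h0 (y - p.2)).comp hc).mul_const (ψ p)
    rw [zero_mul] at this
    exact this

lemma kp_conv_integral (K G : ℝ → ℝ → ℂ) (hK : Continuous (fun q : ℝ × ℝ => K q.1 q.2))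
    (C : ℝ) (hC : ∀ x y, ‖K x y‖ ≤ C)
    (hG : Continuous (fun q : ℝ × ℝ => G q.1 q.2))
    (D : ℝ) (hD : ∀ x y, ‖G x y‖ ≤ D)
    (hKG : ∀ y x, HasDerivAt (fun x' => K x' y) (G x y) x)
    (h0 : ∀ y, Tendsto (fun x => K x y) (cocompact ℝ) (nhds 0))
    (ψ : ℝ × ℝ → ℂ) (hψ : Integrable ψ) (y : ℝ) :
    Tendsto (fun ab : ℝ × ℝ => ∫ x in ab.1..ab.2, ∫ p : ℝ × ℝ, G (x - p.1) (y - p.2) * ψ p)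
      (atBot ×ˢ atTop) (nhds 0) := by
  have hmK : ∀ x, AEStronglyMeasurable (fun p : ℝ × ℝ => K (x - p.1) (y - p.2) * ψ p) := by
    intro x
    have : Continuous (fun p : ℝ × ℝ => K (x - p.1) (y - p.2)) :=
      hK.comp (f := fun p : ℝ × ℝ => (x - p.1, y - p.2)) (by fun_prop)
    exact this.aestronglyMeasurable.mul hψ.aestronglyMeasurable
  have hmG : ∀ x, AEStronglyMeasurable (fun p : ℝ × ℝ => G (x - p.1) (y - p.2) * ψ p) := by
    intro x
    have : Continuous (fun p : ℝ × ℝ => G (x - p.1) (y - p.2)) :=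
      hG.comp (f := fun p : ℝ × ℝ => (x - p.1, y - p.2)) (by fun_prop)
    exact this.aestronglyMeasurable.mul hψ.aestronglyMeasurable
  have hbG : ∀ x (p : ℝ × ℝ), ‖G (x - p.1) (y - p.2) * ψ p‖ ≤ D * ‖ψ p‖ := by
    intro x p; rw [norm_mul]; gcongr; exact hD _ _
  have hcont : Continuous (fun x : ℝ => ∫ p : ℝ × ℝ, G (x - p.1) (y - p.2) * ψ p) := by
    refine continuous_of_dominated (bound := fun p => D * ‖ψ p‖) hmG
      (fun x => Eventually.of_forall (hbG x)) (hψ.norm.const_mul D)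
      (Eventually.of_forall fun p => ?_)
    exact (hG.comp (f := fun x : ℝ => (x - p.1, y - p.2)) (by fun_prop)).mul continuous_const
  have hder : ∀ x, HasDerivAt (fun x : ℝ => ∫ p : ℝ × ℝ, K (x - p.1) (y - p.2) * ψ p)
      (∫ p : ℝ × ℝ, G (x - p.1) (y - p.2) * ψ p) x := by
    intro x
    refine (hasDerivAt_integral_of_dominated_loc_of_deriv_le (s := Set.univ)
      (bound := fun p => D * ‖ψ p‖)
      (F := fun (x : ℝ) (p : ℝ × ℝ) => K (x - p.1) (y - p.2) * ψ p)
      (F' := fun (x : ℝ) (p : ℝ × ℝ) => G (x - p.1) (y - p.2) * ψ p)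
      univ_mem (Eventually.of_forall hmK) ?_ (hmG x)
      (Eventually.of_forall fun p x _ => hbG x p) (hψ.norm.const_mul D)
      (Eventually.of_forall fun p x _ => ?_)).2
    · refine (hψ.norm.const_mul C).mono' (hmK x) (Eventually.of_forall fun p => ?_)
      rw [norm_mul]; gcongr; exact hC _ _
    · exact ((hKG (y - p.2) (x - p.1)).comp_sub_const x p.1).mul_const (ψ p)
  have hlim := kp_conv_tendsto K hK C hC h0 ψ hψ y
  rw [cocompact_eq_atBot_atTop, tendsto_sup] at hlim
  have h := (hlim.2.comp (tendsto_snd (f := (atBot : Filter ℝ)))).sub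
    (hlim.1.comp (tendsto_fst (g := (atTop : Filter ℝ))))
  rw [sub_zero] at h
  refine h.congr fun ab => ?_
  rw [intervalIntegral.integral_eq_sub_of_hasDerivAt (fun x _ => hder x)
    (hcont.intervalIntegrable _ _)]
  rfl

lemma kp_Acont_int (α β t ξ : ℝ) :
    Continuous (fun q : ℝ × ℝ => AtildeInt α β t q.1 q.2 ξ) := by
  unfold AtildeInt; fun_prop

lemma kp_Gcont_int (α β t ξ : ℝ) :
    Continuous (fun q : ℝ × ℝ => GtildeInt α β t q.1 q.2 ξ) := by
  unfold GtildeInt; fun_prop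

/-- KP-BBM antiderivative kernel: for `α > 0`, `β > (α+3)/2`, `t > 0`, the kernel `Ã` is
(absolutely convergent,) continuous and bounded, differentiable in `x` with derivative the
continuous bounded kernel `∂ₓÃ`, and for `ψ ∈ L¹(ℝ²)` the convolution `Ã ⋆ ψ` tends to `0`
as `|x| → ∞`; consequently the generalized Riemann integral in `x` of `(∂ₓÃ) ⋆ ψ`
vanishes for every `y`. -/
theorem KPBBM_kernel_properties (α β t : ℝ) (hα : 0 < α) (hβ : (α + 3) / 2 < β)
    (ht : 0 < t) :
    (∀ x y : ℝ, Integrable (AtildeInt α β t x y)) ∧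
    (∀ x y : ℝ, Integrable (GtildeInt α β t x y)) ∧
    Continuous (fun q : ℝ × ℝ => Atilde α β t q.1 q.2) ∧
    (∃ C : ℝ, ∀ x y : ℝ, ‖Atilde α β t x y‖ ≤ C) ∧
    (∀ y x : ℝ, HasDerivAt (fun x' : ℝ => Atilde α β t x' y) (Gtilde α β t x y) x) ∧
    Continuous (fun q : ℝ × ℝ => Gtilde α β t q.1 q.2) ∧
    (∃ C : ℝ, ∀ x y : ℝ, ‖Gtilde α β t x y‖ ≤ C) ∧
    (∀ ψ : ℝ × ℝ → ℂ, Integrable ψ → ∀ y : ℝ,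
      Tendsto (fun x : ℝ => ∫ p : ℝ × ℝ, Atilde α β t (x - p.1) (y - p.2) * ψ p)
        (cocompact ℝ) (nhds 0)) ∧
    (∀ ψ : ℝ × ℝ → ℂ, Integrable ψ → ∀ y : ℝ,
      Tendsto
        (fun ab : ℝ × ℝ =>
          ∫ x in ab.1..ab.2, ∫ p : ℝ × ℝ, Gtilde α β t (x - p.1) (y - p.2) * ψ p)
        (atBot ×ˢ atTop) (nhds 0)) := by
  have iA := kpA_int α β hα hβ
  have iB := kpB_int α β hα hβ
  have jA : ∀ x y : ℝ, Integrable (AtildeInt α β t x y) := fun x y =>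
    iA.mono' (kpA_aesm α β t x y) (Eventually.of_forall fun ξ => kpA_norm α β t x y ξ)
  have jG : ∀ x y : ℝ, Integrable (GtildeInt α β t x y) := fun x y =>
    iB.mono' (kpG_aesm α β t x y) (Eventually.of_forall fun ξ => (kpG_norm α β t x y ξ).le)
  have cA : Continuous (fun q : ℝ × ℝ => Atilde α β t q.1 q.2) := by
    unfold Atilde
    exact continuous_const.mul (continuous_of_dominated (fun q => kpA_aesm α β t q.1 q.2)
      (fun q => Eventually.of_forall fun ξ => kpA_norm α β t q.1 q.2 ξ) iA
      (Eventually.of_forall fun ξ => kp_Acont_int α β t ξ))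
  have cG : Continuous (fun q : ℝ × ℝ => Gtilde α β t q.1 q.2) := by
    unfold Gtilde
    exact continuous_const.mul (continuous_of_dominated (fun q => kpG_aesm α β t q.1 q.2)
      (fun q => Eventually.of_forall fun ξ => (kpG_norm α β t q.1 q.2 ξ).le) iB
      (Eventually.of_forall fun ξ => kp_Gcont_int α β t ξ))
  have bA : ∃ C : ℝ, ∀ x y : ℝ, ‖Atilde α β t x y‖ ≤ C := by
    refine ⟨‖((t ^ (-(2⁻¹) : ℝ) : ℝ) : ℂ)‖ * ∫ ξ, kpA α β ξ, fun x y => ?_⟩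
    unfold Atilde
    rw [norm_mul]
    gcongr
    exact norm_integral_le_of_norm_le iA (Eventually.of_forall fun ξ => kpA_norm α β t x y ξ)
  have bG : ∃ C : ℝ, ∀ x y : ℝ, ‖Gtilde α β t x y‖ ≤ C := by
    refine ⟨‖Complex.I * ((t ^ (-(2⁻¹) : ℝ) : ℝ) : ℂ)‖ * ∫ ξ, kpB α β ξ, fun x y => ?_⟩
    unfold Gtilde
    rw [norm_mul]
    gcongr
    exact norm_integral_le_of_norm_le iB
      (Eventually.of_forall fun ξ => (kpG_norm α β t x y ξ).le)
  have dA : ∀ y x : ℝ,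
      HasDerivAt (fun x' : ℝ => Atilde α β t x' y) (Gtilde α β t x y) x := by
    intro y x
    have h := (hasDerivAt_integral_of_dominated_loc_of_deriv_le (s := Set.univ)
      (bound := kpB α β) (x₀ := x) (μ := volume)
      (F := fun (x : ℝ) (ξ : ℝ) => AtildeInt α β t x y ξ)
      (F' := fun (x : ℝ) (ξ : ℝ) => Complex.I * GtildeInt α β t x y ξ)
      univ_mem (Eventually.of_forall fun x => kpA_aesm α β t x y) (jA x y)
      ((jG x y).const_mul _).aestronglyMeasurable
      (Eventually.of_forall fun ξ x _ => by
        rw [norm_mul, Complex.norm_I, one_mul]; exact (kpG_norm α β t x y ξ).le) iB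
      (Eventually.of_forall fun ξ x _ => kp_deriv_int α β t x y ξ)).2
    have h2 := h.const_mul ((t ^ (-(2⁻¹) : ℝ) : ℝ) : ℂ)
    unfold Atilde
    refine h2.congr_deriv ?_
    unfold Gtilde
    rw [integral_const_mul]; ring
  obtain ⟨C, hC⟩ := bA
  obtain ⟨D, hD⟩ := bG
  exact ⟨jA, jG, cA, ⟨C, hC⟩, dA, cG, ⟨D, hD⟩,
    fun ψ hψ y => kp_conv_tendsto _ cA C hC (kp_RL α β t) ψ hψ y,
    fun ψ hψ y => kp_conv_integral _ _ cA C hC cG D hD dA (kp_RL α β t) ψ hψ y⟩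
end
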